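/- arXiv:1303.5047 — 9 statements merged into one kernel-verified Lean document; each statement's English description precedes it below -/
import Mathlib

section
/- Assume B is bounded below on the closure of R(D). Then DB|_{closure(R(D))} and BD|_{closure(R(BD))} are similar under conjugation by B: for every v ∈ closure(R(D)) with Bv ∈ D(D), one has Bv ∈ closure(R(BD)), v ∈ D(DB), (DB)v ∈ closure(R(D)), and (BD)(Bv) = B((DB)v); conversely, every u ∈ closure(R(BD)) ∩ D(D) can be written uniquely as u = Bv with v ∈ closure(R(D)), and this v satisfies Bv ∈ D(D). -/
noncomputable section

variable {X : Type*} [NormedAddCommGroup X] [NormedSpace ℂ X]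

/-- A complex normed space is reflexive if the canonical inclusion into its double dual is
surjective. -/
def ReflexiveSpace (X : Type*) [NormedAddCommGroup X] [NormedSpace ℂ X] : Prop :=
  Function.Surjective (NormedSpace.inclusionInDoubleDual ℂ X)

/-- The open bisector `S_ω = {z ≠ 0 : |arg z| < ω or |arg (-z)| < ω}`. -/
def Sector (ω : ℝ) : Set ℂ :=
  {z | z ≠ 0 ∧ (|Complex.arg z| < ω ∨ |Complex.arg (-z)| < ω)}

/-- The kernel of a partially defined operator, viewed as a subspace of the ambient space. -/
def pker (A : X →ₗ.[ℂ] X) : Submodule ℂ X :=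
  (LinearMap.ker A.toFun).map A.domain.subtype

/-- The range of a partially defined operator. -/
def pran (A : X →ₗ.[ℂ] X) : Submodule ℂ X :=
  LinearMap.range A.toFun

/-- `X = N ⊕ M` as a topological direct sum: `N` and `M` are closed complementary subspaces. -/
def IsTopDirectSum (N M : Submodule ℂ X) : Prop :=
  IsClosed (N : Set X) ∧ IsClosed (M : Set X) ∧ N ⊓ M = ⊥ ∧ N ⊔ M = ⊤

/-- `A` kernel/range decomposes: `X = N(A) ⊕ closure (R(A))` as a topological direct sum. -/
def KerRanDecomp (A : X →ₗ.[ℂ] X) : Prop :=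
  IsTopDirectSum (pker A) (pran A).topologicalClosure

/-- A closed operator `A` is bisectorial of angle `ω` if for every `ω' ∈ (ω, π/2)` there is
`C > 0` such that for every `λ ∉ S_{ω'}` the map `I + λA : D(A) → X` is a bijection whose
inverse is bounded with norm at most `C`. -/
def IsBisectorial (A : X →ₗ.[ℂ] X) (ω : ℝ) : Prop :=
  A.IsClosed ∧
    ∀ ω' ∈ Set.Ioo ω (Real.pi / 2), ∃ C > 0, ∀ lam : ℂ, lam ∉ Sector ω' →
      Function.Bijective (fun u : A.domain => (u : X) + lam • A u) ∧
        ∀ u : A.domain, ‖(u : X)‖ ≤ C * ‖(u : X) + lam • A u‖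

/-- The operator `BD`, with domain `D(D)`, acting by `u ↦ B (D u)`. -/
def opBD (B : X →L[ℂ] X) (D : X →ₗ.[ℂ] X) : X →ₗ.[ℂ] X :=
  ⟨D.domain, (B : X →ₗ[ℂ] X).comp D.toFun⟩

/-- The operator `DB`, with domain `{u : B u ∈ D(D)}`, acting by `u ↦ D (B u)`. -/
def opDB (B : X →L[ℂ] X) (D : X →ₗ.[ℂ] X) : X →ₗ.[ℂ] X :=
  ⟨D.domain.comap (B : X →ₗ[ℂ] X),
    D.toFun.comp ((B : X →ₗ[ℂ] X).restrict fun _ hx => hx)⟩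

/-- `B` is bounded below on the set `S`. -/
def BoundedBelowOn (B : X →L[ℂ] X) (S : Set X) : Prop :=
  ∃ c > 0, ∀ u ∈ S, c * ‖u‖ ≤ ‖B u‖

/-- If `B` is bounded below on the closure of `R(D)`, then
`DB` restricted to `closure (R(D))` and `BD` restricted to `closure (R(BD))` are similar under
conjugation by `B`: for `v ∈ closure (R(D))` with `B v ∈ D(D)` one has
`B v ∈ closure (R(BD))`, `v ∈ D(DB)`, `(DB) v ∈ closure (R(D))` and `(BD)(B v) = B ((DB) v)`;
conversely every `u ∈ closure (R(BD)) ∩ D(D)` is uniquely `u = B v` with `v ∈ closure (R(D))`,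
and this `v` satisfies `B v ∈ D(D)`. -/
theorem stmt_4 {X : Type*} [NormedAddCommGroup X] [NormedSpace ℂ X] [CompleteSpace X]
    (hrefl : ReflexiveSpace X) (D : X →ₗ.[ℂ] X) (hD : D.IsClosed)
    (hdense : Dense (D.domain : Set X)) (B : X →L[ℂ] X)
    (hlow : BoundedBelowOn B ((pran D).topologicalClosure : Set X)) :
    (∀ v ∈ ((pran D).topologicalClosure : Set X), ∀ h : B v ∈ D.domain,
      B v ∈ ((pran (opBD B D)).topologicalClosure : Set X) ∧
      v ∈ (opDB B D).domain ∧
      (D ⟨B v, h⟩ : X) ∈ ((pran D).topologicalClosure : Set X) ∧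
      ∀ hv : v ∈ (opDB B D).domain, ∀ h' : B v ∈ (opBD B D).domain,
        opBD B D ⟨B v, h'⟩ = B (opDB B D ⟨v, hv⟩)) ∧
    ∀ u ∈ ((pran (opBD B D)).topologicalClosure : Set X), u ∈ D.domain →
      ∃! v, v ∈ ((pran D).topologicalClosure : Set X) ∧ B v = u ∧ B v ∈ D.domain := by
  obtain ⟨c, hc, hB⟩ := hlow
  have hmaps : ∀ v ∈ ((pran D).topologicalClosure : Set X),
      B v ∈ ((pran (opBD B D)).topologicalClosure : Set X) := by
    intro v hv
    rw [Submodule.topologicalClosure_coe] at hv ⊢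
    refine map_mem_closure B.continuous hv ?_
    rintro _ ⟨x, rfl⟩
    exact ⟨x, rfl⟩
  refine ⟨fun v hv h => ⟨hmaps v hv, h, ?_, fun _ _ => rfl⟩, ?_⟩
  · exact Submodule.le_topologicalClosure _ ⟨⟨B v, h⟩, rfl⟩
  intro u hu hud
  let S := (pran D).topologicalClosure
  have hS : IsClosed (S : Set X) := Submodule.isClosed_topologicalClosure _
  haveI : CompleteSpace S := hS.completeSpace_coe
  let f : S →L[ℂ] X := B.comp S.subtypeL
  have hanti : AntilipschitzWith (Real.toNNReal c⁻¹) f := by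
    refine AddMonoidHomClass.antilipschitz_of_bound f ?_
    intro x
    rw [Real.coe_toNNReal _ (inv_nonneg.2 hc.le), inv_mul_eq_div, le_div_iff₀ hc, mul_comm]
    exact hB x x.2
  have hcl : IsClosed (Set.range f) := hanti.isClosed_range f.uniformContinuous
  have hmem : u ∈ Set.range f := by
    rw [Submodule.topologicalClosure_coe] at hu
    refine closure_minimal ?_ hcl hu
    rintro _ ⟨x, rfl⟩
    exact ⟨⟨D.toFun x, Submodule.le_topologicalClosure _ ⟨x, rfl⟩⟩, rfl⟩
  obtain ⟨v, hv⟩ := hmem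
  have hv' : B v = u := hv
  refine ⟨v, ⟨v.2, hv', by rw [hv']; exact hud⟩, ?_⟩
  rintro w ⟨hw, hwu, -⟩
  have : (⟨w, hw⟩ : S) = v := hanti.injective (show B w = B v by rw [hwu, hv'])
  exact congrArg Subtype.val this
end
end

section
/- Assume B is bounded below on the closure of R(D) and that X = N(D) ⊕ closure(R(BD)) as a topological direct sum. Then X = N(DB) ⊕ closure(R(D)) as a topological direct sum, where N(DB) = {u ∈ X : Bu ∈ N(D)}. -/
noncomputable section

variable {X : Type*} [NormedAddCommGroup X] [NormedSpace ℂ X]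

/-- If `B` is bounded below on the closure of `R(D)` and
`X = N(D) ⊕ closure (R(BD))` as a topological direct sum, then
`X = N(DB) ⊕ closure (R(D))` as a topological direct sum, where
`N(DB) = {u : B u ∈ N(D)}`. -/
theorem stmt_6 {X : Type*} [NormedAddCommGroup X] [NormedSpace ℂ X] [CompleteSpace X]
    (hrefl : ReflexiveSpace X) (D : X →ₗ.[ℂ] X) (hD : D.IsClosed)
    (hdense : Dense (D.domain : Set X)) (B : X →L[ℂ] X)
    (hlow : BoundedBelowOn B ((pran D).topologicalClosure : Set X))
    (hsplit : IsTopDirectSum (pker D) (pran (opBD B D)).topologicalClosure) :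
    pker (opDB B D) = (pker D).comap (B : X →ₗ[ℂ] X) ∧
    IsTopDirectSum (pker (opDB B D)) (pran D).topologicalClosure := by
  obtain ⟨c, hc, hlow⟩ := hlow
  obtain ⟨h1, h2, h3, h4⟩ := hsplit
  have hker : pker (opDB B D) = (pker D).comap (B : X →ₗ[ℂ] X) := by
    ext u
    constructor
    · rintro ⟨⟨v, hv⟩, hv0, rfl⟩
      exact ⟨⟨B v, hv⟩, hv0, rfl⟩
    · rintro ⟨⟨w, hw⟩, hw0, hwu⟩
      have hwu' : w = B u := hwu
      subst hwu'
      exact ⟨⟨u, hw⟩, hw0, rfl⟩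
  refine ⟨hker, ?_⟩
  rw [hker]
  set R := (pran D).topologicalClosure with hR
  have hRc : IsClosed (R : Set X) := Submodule.isClosed_topologicalClosure _
  have hmaps : ∀ u ∈ R, B u ∈ (pran (opBD B D)).topologicalClosure := by
    intro u hu
    have hu' : u ∈ closure (pran D : Set X) := hu
    have : B u ∈ closure (pran (opBD B D) : Set X) := by
      refine map_mem_closure B.continuous hu' ?_
      rintro _ ⟨v, rfl⟩
      exact ⟨v, rfl⟩
    exact this
  have himg : ∀ y ∈ (pran (opBD B D)).topologicalClosure, ∃ r ∈ R, B r = y := by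
    haveI : CompleteSpace R := hRc.completeSpace_coe
    have hanti : AntilipschitzWith (Real.toNNReal c⁻¹) (B.comp R.subtypeL) := by
      apply ContinuousLinearMap.antilipschitz_of_bound
      intro x
      have := hlow x x.2
      rw [Real.coe_toNNReal _ (inv_nonneg.2 hc.le)]
      rw [inv_mul_eq_div, le_div_iff₀ hc, mul_comm]
      exact this
    have hcl : IsClosed (Set.range (B.comp R.subtypeL)) :=
      hanti.isClosed_range (B.comp R.subtypeL).uniformContinuous
    intro y hy
    have hy' : y ∈ closure (pran (opBD B D) : Set X) := hy
    have hsub : (pran (opBD B D) : Set X) ⊆ Set.range (B.comp R.subtypeL) := by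
      rintro _ ⟨v, rfl⟩
      exact ⟨⟨D v, Submodule.le_topologicalClosure _ ⟨v, rfl⟩⟩, rfl⟩
    obtain ⟨r, hr⟩ := closure_minimal hsub hcl hy'
    exact ⟨r, r.2, hr⟩
  refine ⟨h1.preimage B.continuous, hRc, ?_, ?_⟩
  · rw [eq_bot_iff]
    rintro u ⟨hu1, hu2⟩
    have h0 : B u ∈ pker D ⊓ (pran (opBD B D)).topologicalClosure := ⟨hu1, hmaps u hu2⟩
    rw [h3, Submodule.mem_bot] at h0
    have := hlow u hu2
    rw [h0, norm_zero] at this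
    have hn : ‖u‖ ≤ 0 := by
      by_contra! h
      nlinarith [mul_pos hc h]
    simpa using hn
  · rw [eq_top_iff]
    intro x _
    have hx : B x ∈ pker D ⊔ (pran (opBD B D)).topologicalClosure := by rw [h4]; trivial
    obtain ⟨n, hn, m, hm, hnm⟩ := Submodule.mem_sup.1 hx
    obtain ⟨r, hr, rfl⟩ := himg m hm
    refine Submodule.mem_sup.2 ⟨x - r, ?_, r, hr, sub_add_cancel x r⟩
    have : B (x - r) = n := by rw [map_sub, ← hnm, add_sub_cancel_right]
    change B (x - r) ∈ pker D
    rw [this]; exact hn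
end
end

section
/- Assume B is bounded below on the closure of R(D) and that X = N(D) ⊕ closure(R(BD)) as a topological direct sum. Then R(DB) = R(D), i.e. {D(Bu) : u ∈ X, Bu ∈ D(D)} = {Du : u ∈ D(D)}. -/
noncomputable section

variable {X : Type*} [NormedAddCommGroup X] [NormedSpace ℂ X]

/-- If `B` is bounded below on the closure of `R(D)` and
`X = N(D) ⊕ closure (R(BD))` as a topological direct sum, then `R(DB) = R(D)`. -/
theorem stmt_7 {X : Type*} [NormedAddCommGroup X] [NormedSpace ℂ X] [CompleteSpace X]
    (hrefl : ReflexiveSpace X) (D : X →ₗ.[ℂ] X) (hD : D.IsClosed)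
    (hdense : Dense (D.domain : Set X)) (B : X →L[ℂ] X)
    (hlow : BoundedBelowOn B ((pran D).topologicalClosure : Set X))
    (hsplit : IsTopDirectSum (pker D) (pran (opBD B D)).topologicalClosure) :
    pran (opDB B D) = pran D := by
  apply le_antisymm
  · rintro _ ⟨u, rfl⟩
    exact ⟨⟨B u.1, u.2⟩, rfl⟩
  · rintro _ ⟨u, rfl⟩
    obtain ⟨c, hc, hlow⟩ := hlow
    obtain ⟨-, -, -, hsup⟩ := hsplit
    have hu : (u : X) ∈ pker D ⊔ (pran (opBD B D)).topologicalClosure := by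
      rw [hsup]; trivial
    obtain ⟨n, hn, m, hm, hnm⟩ := Submodule.mem_sup.1 hu
    obtain ⟨n', hn', rfl⟩ := hn
    let K := (pran D).topologicalClosure
    have : CompleteSpace K := (Submodule.isClosed_topologicalClosure _).completeSpace_coe
    let f : K →L[ℂ] X := B.comp K.subtypeL
    have hf : AntilipschitzWith (Real.toNNReal c⁻¹) f := by
      apply AddMonoidHomClass.antilipschitz_of_bound
      intro x
      rw [Real.coe_toNNReal _ (inv_pos.2 hc).le, inv_mul_eq_div, le_div_iff₀ hc, mul_comm]
      exact hlow x x.2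
    have hcl : IsClosed (Set.range f) := hf.isClosed_range f.uniformContinuous
    have hsub : ((pran (opBD B D)).topologicalClosure : Set X) ⊆ Set.range f := by
      rw [Submodule.topologicalClosure_coe]
      apply closure_minimal _ hcl
      rintro _ ⟨w, rfl⟩
      exact ⟨⟨D.toFun w, Submodule.le_topologicalClosure _ ⟨w, rfl⟩⟩, rfl⟩
    obtain ⟨v, hv⟩ := hsub hm
    have hBv : B (v : X) = ((u - n' : D.domain) : X) := by
      change B (v : X) = m at hv
      rw [hv, Submodule.coe_sub, ← hnm]
      simp
    have hmem : B (v : X) ∈ D.domain := by rw [hBv]; exact (u - n').2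
    refine ⟨⟨(v : X), hmem⟩, ?_⟩
    change D.toFun ⟨B (v : X), hmem⟩ = D.toFun u
    have h1 : (⟨B (v : X), hmem⟩ : D.domain) = u - n' := Subtype.ext hBv
    have h2 : D.toFun n' = 0 := hn'
    rw [h1, map_sub, h2, sub_zero]
end
end

section
/- Assume B is bounded below on the closure of R(D) and that H = N(D) ⊕ closure(R(BD)) as a topological direct sum. Then H = N(D*B*) ⊕ closure(R(D*)) as a topological direct sum, where N(D*B*) = {u ∈ H : B*u ∈ N(D*)}. -/
noncomputable section

variable {X : Type*} [NormedAddCommGroup X] [NormedSpace ℂ X]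

theorem aux_mem_pker {H : Type*} [NormedAddCommGroup H] [NormedSpace ℂ H]
    (A : H →ₗ.[ℂ] H) (x : H) : x ∈ pker A ↔ (x, (0 : H)) ∈ A.graph := by
  rw [LinearPMap.mem_graph_iff]
  simp only [pker, Submodule.mem_map, LinearMap.mem_ker, Submodule.subtype_apply]
  exact ⟨fun ⟨y, h1, h2⟩ => ⟨y, h2, h1⟩, fun ⟨y, h1, h2⟩ => ⟨y, h2, h1⟩⟩

theorem aux_pker_opDB {H : Type*} [NormedAddCommGroup H] [NormedSpace ℂ H]
    (B : H →L[ℂ] H) (A : H →ₗ.[ℂ] H) :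
    pker (opDB B A) = (pker A).comap (B : H →ₗ[ℂ] H) := by
  ext x
  simp only [pker, Submodule.mem_map, LinearMap.mem_ker, Submodule.subtype_apply,
    Submodule.mem_comap]
  constructor
  · rintro ⟨y, h1, rfl⟩
    exact ⟨⟨B y, y.2⟩, h1, rfl⟩
  · rintro ⟨y, h1, h2⟩
    have hy : B x ∈ A.domain := by
      have := y.2
      rw [h2] at this
      exact this
    refine ⟨⟨x, hy⟩, ?_, rfl⟩
    have : y = ⟨B x, hy⟩ := Subtype.ext h2
    subst this
    exact h1

theorem aux_pker_adjoint {H : Type*} [NormedAddCommGroup H] [InnerProductSpace ℂ H]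
    [CompleteSpace H] (D : H →ₗ.[ℂ] H) (hdense : Dense (D.domain : Set H)) :
    pker D.adjoint = (pran D)ᗮ := by
  ext y
  rw [aux_mem_pker, LinearPMap.adjoint_graph_eq_graph_adjoint hdense, Submodule.mem_adjoint_iff,
    Submodule.mem_orthogonal]
  constructor
  · rintro h u ⟨a, rfl⟩
    have := h a (D a) (D.mem_graph a)
    simpa using this
  · intro h a b hab
    obtain ⟨z, h1, h2⟩ := (LinearPMap.mem_graph_iff _).1 hab
    have := h b ⟨z, h2⟩
    simp [this]

theorem aux_pran_adjoint {H : Type*} [NormedAddCommGroup H] [InnerProductSpace ℂ H]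
    [CompleteSpace H] (D : H →ₗ.[ℂ] H) (hD : D.IsClosed) (hdense : Dense (D.domain : Set H)) :
    (pran D.adjoint)ᗮ = pker D := by
  ext x
  rw [aux_mem_pker, Submodule.mem_orthogonal]
  have key : ∀ y w : H, (y, w) ∈ D.adjoint.graph ↔
      ∀ a b, (a, b) ∈ D.graph → inner ℂ b y - inner ℂ a w = 0 := by
    intro y w
    rw [LinearPMap.adjoint_graph_eq_graph_adjoint hdense, Submodule.mem_adjoint_iff]
  constructor
  · intro h
    let e := WithLp.prodContinuousLinearEquiv 2 ℂ H H
    let G : Submodule ℂ (WithLp 2 (H × H)) :=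
      D.graph.comap (e : WithLp 2 (H × H) →ₗ[ℂ] H × H)
    have hG : IsClosed (G : Set (WithLp 2 (H × H))) := IsClosed.preimage e.continuous hD
    have : WithLp.toLp 2 (x, (0 : H)) ∈ Gᗮᗮ := by
      rw [Submodule.mem_orthogonal]
      intro v hv
      rw [Submodule.mem_orthogonal] at hv
      have h1 : (v.snd, -v.fst) ∈ D.adjoint.graph := by
        rw [key]
        intro a b hab
        have := hv (WithLp.toLp 2 (a, b)) hab
        simp only [WithLp.prod_inner_apply] at this
        rw [inner_neg_right, sub_neg_eq_add, add_comm]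
        exact this
      obtain ⟨z, -, h3⟩ := (LinearPMap.mem_graph_iff _).1 h1
      have := h (-v.fst) ⟨z, h3⟩
      rw [inner_neg_left, neg_eq_zero] at this
      simp only [WithLp.prod_inner_apply]
      simpa using this
    rw [Submodule.orthogonal_orthogonal_eq_closure, hG.submodule_topologicalClosure_eq] at this
    exact this
  · rintro h u ⟨z, rfl⟩
    have := (key _ _).1 (D.adjoint.mem_graph z) x 0 h
    rw [inner_zero_left, zero_sub, neg_eq_zero] at this
    rw [← inner_conj_symm]
    change (starRingEnd ℂ) (inner ℂ x (D.adjoint z)) = 0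
    rw [this, map_zero]

theorem aux_split {H : Type*} [NormedAddCommGroup H] [InnerProductSpace ℂ H]
    [CompleteSpace H] (N M : Submodule ℂ H) (h : IsTopDirectSum N M) :
    IsTopDirectSum Mᗮ Nᗮ := by
  obtain ⟨hN, hM, hi, hs⟩ := h
  refine ⟨Submodule.isClosed_orthogonal _, Submodule.isClosed_orthogonal _, ?_, ?_⟩
  · rw [Submodule.inf_orthogonal, sup_comm, hs, Submodule.top_orthogonal_eq_bot]
  · have hc : IsCompl N M := ⟨disjoint_iff.2 hi, codisjoint_iff.2 hs⟩
    have ht := Submodule.IsCompl.isTopCompl_of_isClosed hc hN hM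
    obtain ⟨P, hP1, hP2⟩ : ∃ P : H →L[ℂ] H, (∀ x ∈ N, P x = x) ∧ ∀ x ∈ M, P x = 0 := by
      refine ⟨N.projectionL M ht, fun x hx => ?_, fun x hx => ?_⟩
      · exact Submodule.projection_apply_of_mem_left hc hx
      · exact (Submodule.projection_apply_eq_zero_iff hc).2 hx
    rw [eq_top_iff]
    intro u _
    rw [Submodule.mem_sup]
    refine ⟨ContinuousLinearMap.adjoint P u, ?_, u - ContinuousLinearMap.adjoint P u, ?_, by abel⟩
    · rw [Submodule.mem_orthogonal]
      intro m hm
      rw [ContinuousLinearMap.adjoint_inner_right, hP2 m hm, inner_zero_left]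
    · rw [Submodule.mem_orthogonal]
      intro m hm
      rw [inner_sub_right, ContinuousLinearMap.adjoint_inner_right, hP1 m hm, sub_self]

/-- (Hilbert space.) If `B` is bounded below on the closure of `R(D)` and
`H = N(D) ⊕ closure (R(BD))` as a topological direct sum, then
`H = N(D*B*) ⊕ closure (R(D*))` as a topological direct sum, where
`N(D*B*) = {u : B* u ∈ N(D*)}`. -/
theorem stmt_8 {H : Type*} [NormedAddCommGroup H] [InnerProductSpace ℂ H] [CompleteSpace H]
    (D : H →ₗ.[ℂ] H) (hD : D.IsClosed) (hdense : Dense (D.domain : Set H)) (B : H →L[ℂ] H)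
    (hlow : BoundedBelowOn B ((pran D).topologicalClosure : Set H))
    (hsplit : IsTopDirectSum (pker D) (pran (opBD B D)).topologicalClosure) :
    pker (opDB (ContinuousLinearMap.adjoint B) D.adjoint)
      = (pker D.adjoint).comap (ContinuousLinearMap.adjoint B : H →ₗ[ℂ] H) ∧
    IsTopDirectSum (pker (opDB (ContinuousLinearMap.adjoint B) D.adjoint))
      (pran D.adjoint).topologicalClosure := by
  refine ⟨aux_pker_opDB _ _, ?_⟩
  have h := aux_split _ _ hsplit
  rw [Submodule.orthogonal_closure, ← aux_pran_adjoint D hD hdense,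
    Submodule.orthogonal_orthogonal_eq_closure] at h
  convert h using 1
  rw [aux_pker_opDB, aux_pker_adjoint D hdense]
  ext x
  rw [Submodule.mem_comap, Submodule.mem_orthogonal, Submodule.mem_orthogonal]
  constructor
  · rintro h u ⟨a, rfl⟩
    have := h (D a) ⟨a, rfl⟩
    exact (ContinuousLinearMap.adjoint_inner_right B (D a) x).symm.trans this
  · rintro h u ⟨a, rfl⟩
    have := h (B (D a)) ⟨a, rfl⟩
    exact (ContinuousLinearMap.adjoint_inner_right B (D a) x).trans this
end
end

section
/- Assume B is bounded below on the closure of R(D) and that H = N(D) ⊕ closure(R(BD)) as a topological direct sum. Then B* is bounded below on the closure of R(D*): there exists c' > 0 such that ‖B*w‖ ≥ c'‖w‖ for all w in the closure of R(D*); consequently B* maps the closure of R(D*) isomorphically onto the closure of R(B*D*). -/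
noncomputable section

variable {X : Type*} [NormedAddCommGroup X] [NormedSpace ℂ X]

theorem image_closure_aux {H : Type*} [NormedAddCommGroup H] [NormedSpace ℂ H] [CompleteSpace H]
    (B : H →L[ℂ] H) (D : H →ₗ.[ℂ] H)
    (hlow : BoundedBelowOn B ((pran D).topologicalClosure : Set H)) :
    B '' ((pran D).topologicalClosure : Set H) =
      ((pran (opBD B D)).topologicalClosure : Set H) := by
  obtain ⟨c, hc, hb⟩ := hlow
  have hran : ((pran (opBD B D)) : Set H) = B '' (pran D : Set H) := by
    ext x
    constructor
    · rintro ⟨u, rfl⟩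
      exact ⟨D u, ⟨u, rfl⟩, rfl⟩
    · rintro ⟨_, ⟨u, rfl⟩, rfl⟩
      exact ⟨u, rfl⟩
  have hcl : IsClosed (B '' ((pran D).topologicalClosure : Set H)) := by
    have : CompleteSpace (pran D).topologicalClosure :=
      (Submodule.isClosed_topologicalClosure _).completeSpace_coe
    let T := B.comp (pran D).topologicalClosure.subtypeL
    have hT : AntilipschitzWith (Real.toNNReal c⁻¹) T := by
      apply ContinuousLinearMap.antilipschitz_of_bound
      intro x
      rw [Real.coe_toNNReal _ (inv_pos.2 hc).le, inv_mul_eq_div, le_div_iff₀ hc, mul_comm]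
      exact hb x x.2
    have := hT.isClosed_range T.uniformContinuous
    convert this using 1
    ext x
    constructor
    · rintro ⟨y, hy, rfl⟩
      exact ⟨⟨y, hy⟩, rfl⟩
    · rintro ⟨y, rfl⟩
      exact ⟨y, y.2, rfl⟩
  apply Set.Subset.antisymm
  · rw [Submodule.topologicalClosure_coe, Submodule.topologicalClosure_coe, hran]
    exact image_closure_subset_closure_image B.continuous
  · rw [Submodule.topologicalClosure_coe, hran]
    exact closure_minimal (Set.image_mono subset_closure) hcl

theorem ortho_aux {H : Type*} [NormedAddCommGroup H] [InnerProductSpace ℂ H] [CompleteSpace H]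
    (D : H →ₗ.[ℂ] H) (hdense : Dense (D.domain : Set H)) (w n : H)
    (hw : w ∈ ((pran D.adjoint).topologicalClosure : Set H)) (hn : n ∈ pker D) :
    inner ℂ w n = 0 := by
  have hc : IsClosed {w : H | inner ℂ w n = 0} :=
    isClosed_eq (by fun_prop) continuous_const
  refine closure_minimal ?_ hc hw
  rintro _ ⟨y, rfl⟩
  obtain ⟨u, hu, rfl⟩ := hn
  have h := LinearPMap.adjoint_isFormalAdjoint hdense y u
  have hu' : D u = 0 := hu
  rw [hu', inner_zero_right] at h
  exact h

/-- (Hilbert space.) If `B` is bounded below on the closure of `R(D)` and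
`H = N(D) ⊕ closure (R(BD))` as a topological direct sum, then `B*` is bounded below on the
closure of `R(D*)`, and consequently `B*` maps `closure (R(D*))` isomorphically onto
`closure (R(B*D*))`. -/
theorem stmt_9 {H : Type*} [NormedAddCommGroup H] [InnerProductSpace ℂ H] [CompleteSpace H]
    (D : H →ₗ.[ℂ] H) (hD : D.IsClosed) (hdense : Dense (D.domain : Set H)) (B : H →L[ℂ] H)
    (hlow : BoundedBelowOn B ((pran D).topologicalClosure : Set H))
    (hsplit : IsTopDirectSum (pker D) (pran (opBD B D)).topologicalClosure) :
    ∃ c' > 0,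
      (∀ w ∈ ((pran D.adjoint).topologicalClosure : Set H),
        c' * ‖w‖ ≤ ‖ContinuousLinearMap.adjoint B w‖) ∧
      Set.InjOn (ContinuousLinearMap.adjoint B)
        ((pran D.adjoint).topologicalClosure : Set H) ∧
      (ContinuousLinearMap.adjoint B) '' ((pran D.adjoint).topologicalClosure : Set H)
        = ((pran (opBD (ContinuousLinearMap.adjoint B) D.adjoint)).topologicalClosure :
            Set H) := by
  have hbound : ∃ c' > 0, ∀ w ∈ ((pran D.adjoint).topologicalClosure : Set H),
      c' * ‖w‖ ≤ ‖ContinuousLinearMap.adjoint B w‖ := by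
    have him := image_closure_aux B D hlow
    obtain ⟨c, hc, hb⟩ := hlow
    obtain ⟨hN, hM, hinf, hsup⟩ := hsplit
    have hcompl : IsCompl (pran (opBD B D)).topologicalClosure (pker D) :=
      IsCompl.symm (IsCompl.of_eq hinf hsup)
    let P := Submodule.linearProjOfClosedCompl _ _ hcompl hM hN
    refine ⟨c / (‖P‖ + 1), by positivity, fun w hw => ?_⟩
    have hker : w - (P w : H) ∈ pker D := by
      have : P (w - (P w : H)) = 0 := by
        rw [map_sub, sub_eq_zero]
        exact (Submodule.projectionOnto_apply_left hcompl (P w)).symm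
      exact (Submodule.projectionOnto_apply_eq_zero_iff hcompl).1 this
    have h0 := ortho_aux D hdense w _ hw hker
    have hPw : (P w : H) ∈ B '' ((pran D).topologicalClosure : Set H) := by
      rw [him]; exact (P w).2
    obtain ⟨u, hu, huP⟩ := hPw
    have h1 : inner ℂ w w = inner ℂ (ContinuousLinearMap.adjoint B w) u := by
      rw [ContinuousLinearMap.adjoint_inner_left, huP]
      rwa [inner_sub_right, sub_eq_zero] at h0
    have h2 : ‖w‖ * ‖w‖ ≤ ‖ContinuousLinearMap.adjoint B w‖ * ‖u‖ := by
      have := norm_inner_le_norm (𝕜 := ℂ) (ContinuousLinearMap.adjoint B w) u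
      rw [← h1, inner_self_eq_norm_sq_to_K] at this
      simpa [sq] using this
    have h3 : c * ‖u‖ ≤ (‖P‖ + 1) * ‖w‖ := by
      have a := hb u hu
      rw [huP] at a
      have b : ‖(P w : H)‖ ≤ ‖P‖ * ‖w‖ := P.le_opNorm w
      nlinarith [norm_nonneg w]
    rw [div_mul_eq_mul_div, div_le_iff₀ (by positivity)]
    rcases (norm_nonneg w).eq_or_lt with hw0 | hw0
    · rw [← hw0]; simp; positivity
    · refine le_of_mul_le_mul_right ?_ hw0
      have h4 := mul_le_mul_of_nonneg_left h3
        (norm_nonneg (ContinuousLinearMap.adjoint B w))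
      have h5 := mul_le_mul_of_nonneg_left h2 hc.le
      linarith
  obtain ⟨c', hc', hb'⟩ := hbound
  refine ⟨c', hc', hb', ?_, image_closure_aux _ _ ⟨c', hc', hb'⟩⟩
  intro x hx y hy hxy
  have h := hb' (x - y) (Submodule.sub_mem _ hx hy)
  rw [map_sub, hxy, sub_self, norm_zero] at h
  have : ‖x - y‖ ≤ 0 := by
    by_contra hh
    push Not at hh
    nlinarith [mul_pos hc' hh]
  exact sub_eq_zero.1 (norm_le_zero_iff.1 this)
end
end

section
/- Assume B is bounded below on the closure of R(D) and that H = N(D) ⊕ closure(R(BD)) as a topological direct sum. Then (DB)* = B*D*: the adjoint of the operator DB (with domain {u ∈ H : Bu ∈ D(D)}) has domain D(D*) and (DB)*u = B*(D*u) for all u ∈ D(D*). -/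
noncomputable section

variable {X : Type*} [NormedAddCommGroup X] [NormedSpace ℂ X]

lemma mem_pker_aux {X : Type*} [NormedAddCommGroup X] [NormedSpace ℂ X] {D : X →ₗ.[ℂ] X} {x : X}
    (hx : x ∈ pker D) : ∃ h : x ∈ D.domain, D ⟨x, h⟩ = 0 := by
  obtain ⟨z, hz, rfl⟩ := hx
  exact ⟨z.2, hz⟩

lemma exists_T_aux {H : Type*} [NormedAddCommGroup H] [InnerProductSpace ℂ H] [CompleteSpace H]
    (D : H →ₗ.[ℂ] H) (B : H →L[ℂ] H)
    (hlow : BoundedBelowOn B ((pran D).topologicalClosure : Set H))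
    (hsplit : IsTopDirectSum (pker D) (pran (opBD B D)).topologicalClosure) :
    ∃ T : H →L[ℂ] H, ∀ v, v - B (T v) ∈ pker D := by
  obtain ⟨hN, hM, hinf, hsup⟩ := hsplit
  obtain ⟨c, hc, hB⟩ := hlow
  set R := (pran D).topologicalClosure with hR
  have hRc : IsClosed (R : Set H) := Submodule.isClosed_topologicalClosure _
  haveI : CompleteSpace R := hRc.completeSpace_coe
  haveI : CompleteSpace (pker D) := hN.completeSpace_coe
  have hBR : ∀ r ∈ R, B r ∈ (pran (opBD B D)).topologicalClosure := by
    intro r hr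
    refine map_mem_closure B.continuous hr ?_
    rintro _ ⟨z, rfl⟩
    exact ⟨z, rfl⟩
  have hanti : AntilipschitzWith (Real.toNNReal c⁻¹) (B.comp R.subtypeL) := by
    apply ContinuousLinearMap.antilipschitz_of_bound
    intro x
    rw [Real.coe_toNNReal _ (by positivity), inv_mul_eq_div, le_div_iff₀ hc, mul_comm]
    exact hB x x.2
  have hcl := hanti.isClosed_range (B.comp R.subtypeL).uniformContinuous
  have hMR : ∀ m ∈ (pran (opBD B D)).topologicalClosure, ∃ r : R, B r = m := by
    intro m hm
    refine closure_minimal ?_ hcl hm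
    rintro _ ⟨z, rfl⟩
    exact ⟨⟨D z, Submodule.le_topologicalClosure _ ⟨z, rfl⟩⟩, rfl⟩
  let S : (pker D × R) →L[ℂ] H := (pker D).subtypeL.coprod (B.comp R.subtypeL)
  have hSa : ∀ p, S p = p.1 + B p.2 := fun p => rfl
  have hker : LinearMap.ker (S : (pker D × R) →ₗ[ℂ] H) = ⊥ := by
    rw [LinearMap.ker_eq_bot']
    rintro ⟨n, r⟩ h
    have h : (n : H) + B r = 0 := h
    have h1 : B r = -(n : H) := by rw [eq_neg_iff_add_eq_zero, add_comm]; exact h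
    have h2 : B r ∈ pker D ⊓ (pran (opBD B D)).topologicalClosure :=
      ⟨h1 ▸ neg_mem n.2, hBR _ r.2⟩
    rw [hinf, Submodule.mem_bot] at h2
    have h3 := hB r r.2
    rw [h2, norm_zero] at h3
    have h4 : (r : H) = 0 := by
      rw [← norm_le_zero_iff]
      nlinarith
    rw [h2, add_zero] at h
    ext
    · exact h
    · exact h4
  have hran : LinearMap.range (S : (pker D × R) →ₗ[ℂ] H) = ⊤ := by
    rw [eq_top_iff]
    intro v _
    have hv : v ∈ pker D ⊔ (pran (opBD B D)).topologicalClosure := hsup ▸ Submodule.mem_top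
    obtain ⟨n, hn, m, hm, rfl⟩ := Submodule.mem_sup.1 hv
    obtain ⟨r, rfl⟩ := hMR m hm
    exact ⟨(⟨n, hn⟩, r), rfl⟩
  let e := ContinuousLinearEquiv.ofBijective S hker hran
  refine ⟨R.subtypeL.comp ((ContinuousLinearMap.snd ℂ (pker D) R).comp (e.symm : H →L[ℂ] (pker D × R))), ?_⟩
  intro v
  have h : ((e.symm v).1 : H) + B (e.symm v).2 = v := e.apply_symm_apply v
  have h' : v - B ((e.symm v).2 : H) = (e.symm v).1 := by
    rw [sub_eq_iff_eq_add]; exact h.symm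
  change v - B ((e.symm v).2 : H) ∈ _
  rw [h']
  exact (e.symm v).1.2

/-- (Hilbert space.) If `B` is bounded below on the closure of `R(D)` and
`H = N(D) ⊕ closure (R(BD))` as a topological direct sum, then `(DB)* = B*D*`: the adjoint of
`DB` has domain `D(D*)` and acts by `u ↦ B* (D* u)`. -/
theorem stmt_10 {H : Type*} [NormedAddCommGroup H] [InnerProductSpace ℂ H] [CompleteSpace H]
    (D : H →ₗ.[ℂ] H) (hD : D.IsClosed) (hdense : Dense (D.domain : Set H)) (B : H →L[ℂ] H)
    (hlow : BoundedBelowOn B ((pran D).topologicalClosure : Set H))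
    (hsplit : IsTopDirectSum (pker D) (pran (opBD B D)).topologicalClosure) :
    (opDB B D).adjoint.domain = D.adjoint.domain ∧
    ∀ (u : H) (hu : u ∈ (opDB B D).adjoint.domain) (hu' : u ∈ D.adjoint.domain),
      (opDB B D).adjoint ⟨u, hu⟩ = ContinuousLinearMap.adjoint B (D.adjoint ⟨u, hu'⟩) := by
  obtain ⟨T, hT⟩ := exists_T_aux D B hlow hsplit
  have hBT : ∀ v ∈ D.domain, B (T v) ∈ D.domain := by
    intro v hv
    have := D.domain.sub_mem hv (mem_pker_aux (hT v)).1
    rwa [sub_sub_cancel] at this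
  have hDBT : ∀ v : D.domain, D ⟨B (T v), hBT v v.2⟩ = D v := by
    intro v
    obtain ⟨h, h0⟩ := mem_pker_aux (hT v)
    have : (⟨(v : H) - B (T v), h⟩ : D.domain) = v - ⟨B (T v), hBT v v.2⟩ := rfl
    rw [this, LinearPMap.map_sub, sub_eq_zero] at h0
    exact h0.symm
  have hdense' : Dense ((opDB B D).domain : Set H) := by
    intro u
    have hcont : Continuous (fun w => u - T (B u) + T w) := by fun_prop
    have := map_mem_closure hcont (hdense (B u)) (t := ((opDB B D).domain : Set H)) ?_
    · simpa using this
    · intro w hw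
      change B (u - T (B u) + T w) ∈ D.domain
      rw [map_add, map_sub]
      exact D.domain.add_mem (mem_pker_aux (hT (B u))).1 (hBT w hw)
  have hadj : ∀ (u : H) (hu' : u ∈ D.adjoint.domain) (x : (opDB B D).domain),
      inner ℂ (ContinuousLinearMap.adjoint B (D.adjoint ⟨u, hu'⟩)) (x : H)
        = inner ℂ u ((opDB B D) x) := by
    intro u hu' x
    rw [ContinuousLinearMap.adjoint_inner_left]
    exact LinearPMap.adjoint_isFormalAdjoint hdense ⟨u, hu'⟩ ⟨B x, x.2⟩
  refine ⟨le_antisymm ?_ ?_, ?_⟩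
  · intro y hy
    rw [LinearPMap.mem_adjoint_domain_iff] at hy ⊢
    have hc : Continuous (fun v : D.domain => (⟨T v, hBT v v.2⟩ : (opDB B D).domain)) := by
      apply Continuous.subtype_mk
      fun_prop
    refine (hy.comp hc).congr ?_
    intro v
    exact congrArg (inner ℂ y) (hDBT v)
  · intro y hy
    exact LinearPMap.mem_adjoint_domain_of_exists _ ⟨_, hadj y hy⟩
  · intro u hu hu'
    exact LinearPMap.adjoint_apply_eq hdense' _ (hadj u hu')
end
end

section
/- Assume B is bounded below on the closure of R(D) and that H = N(D) ⊕ closure(R(BD)) as a topological direct sum. Then the dual of closure(R(BD)) is identified with closure(R(D*)) via the inner product: for every continuous linear functional ℓ on the subspace closure(R(BD)) there exists w ∈ closure(R(D*)) such that ℓ(u) = ⟨w, u⟩ for all u ∈ closure(R(BD)), and the norms ‖ℓ‖ and ‖w‖ are comparable (with constants independent of ℓ); conversely each w ∈ closure(R(D*)) defines such a functional. -/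
noncomputable section

variable {X : Type*} [NormedAddCommGroup X] [NormedSpace ℂ X]

theorem mem_pker_of_orth {H : Type*} [NormedAddCommGroup H] [InnerProductSpace ℂ H]
    [CompleteSpace H] (D : H →ₗ.[ℂ] H) (hD : D.IsClosed) (hdense : Dense (D.domain : Set H))
    (v : H) (hv : v ∈ (pran D.adjoint)ᗮ) : v ∈ pker D := by
  let K : Submodule ℂ (WithLp 2 (H × H)) :=
    D.graph.comap (WithLp.linearEquiv 2 ℂ (H × H)).toLinearMap
  have hK : IsClosed (K : Set (WithLp 2 (H × H))) :=
    IsClosed.preimage (WithLp.prod_continuous_ofLp 2 H H) hD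
  have hmem : (WithLp.toLp 2 (v, (0 : H))) ∈ Kᗮᗮ := by
    rw [Submodule.mem_orthogonal]
    intro u hu
    rw [Submodule.mem_orthogonal'] at hu
    have h1 : ∀ x : D.domain, inner ℂ u.fst (x : H) + inner ℂ u.snd (D x) = 0 := by
      intro x
      have := hu (WithLp.toLp 2 ((x : H), D x)) (by
        change ((x : H), D x) ∈ D.graph
        exact D.mem_graph x)
      simpa [WithLp.prod_inner_apply] using this
    have h2 : ∀ x : D.domain, inner ℂ (-u.fst) (x : H) = inner ℂ u.snd (D x) := by
      intro x
      rw [inner_neg_left]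
      linear_combination -(h1 x)
    have hdom := D.mem_adjoint_domain_of_exists u.snd ⟨_, h2⟩
    have h3 := LinearPMap.adjoint_apply_eq hdense ⟨u.snd, hdom⟩ h2
    have h4 : -u.fst ∈ pran D.adjoint := ⟨⟨u.snd, hdom⟩, h3⟩
    have h5 := (Submodule.mem_orthogonal _ _).1 hv _ h4
    rw [inner_neg_left, neg_eq_zero] at h5
    simpa [WithLp.prod_inner_apply] using h5
  have : CompleteSpace K := hK.completeSpace_coe
  rw [Submodule.orthogonal_orthogonal] at hmem
  have hg : (v, (0 : H)) ∈ D.graph := hmem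
  obtain ⟨y, hy1, hy2⟩ := (LinearPMap.mem_graph_iff D).1 hg
  exact ⟨y, hy2, hy1⟩

/-- (Hilbert space.) If `B` is bounded below on the closure of `R(D)` and
`H = N(D) ⊕ closure (R(BD))` as a topological direct sum, then the dual of
`closure (R(BD))` is identified with `closure (R(D*))` via the inner product: every continuous
linear functional `ℓ` on `closure (R(BD))` is of the form `u ↦ ⟪w, u⟫` for some
`w ∈ closure (R(D*))` with `‖ℓ‖` and `‖w‖` comparable (constants independent of `ℓ`), and
conversely every such `w` defines such a functional. -/
theorem stmt_11 {H : Type*} [NormedAddCommGroup H] [InnerProductSpace ℂ H] [CompleteSpace H]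
    (D : H →ₗ.[ℂ] H) (hD : D.IsClosed) (hdense : Dense (D.domain : Set H)) (B : H →L[ℂ] H)
    (hlow : BoundedBelowOn B ((pran D).topologicalClosure : Set H))
    (hsplit : IsTopDirectSum (pker D) (pran (opBD B D)).topologicalClosure) :
    (∃ C₁ > (0 : ℝ), ∃ C₂ > (0 : ℝ),
      ∀ ℓ : ↥((pran (opBD B D)).topologicalClosure) →L[ℂ] ℂ,
        ∃ w ∈ ((pran D.adjoint).topologicalClosure : Set H),
          (∀ u : ↥((pran (opBD B D)).topologicalClosure), ℓ u = @inner ℂ H _ w (u : H)) ∧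
          C₁ * ‖w‖ ≤ ‖ℓ‖ ∧ ‖ℓ‖ ≤ C₂ * ‖w‖) ∧
    ∀ w ∈ ((pran D.adjoint).topologicalClosure : Set H),
      ∃ ℓ : ↥((pran (opBD B D)).topologicalClosure) →L[ℂ] ℂ,
        ∀ u : ↥((pran (opBD B D)).topologicalClosure), ℓ u = @inner ℂ H _ w (u : H) := by
  constructor
  · obtain ⟨hN, hM, hinf, hsup⟩ := hsplit
    generalize (pran (opBD B D)).topologicalClosure = M at *
    have hc : IsCompl M (pker D) :=
      ⟨by rw [disjoint_iff, inf_comm]; exact hinf,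
       by rw [codisjoint_iff, sup_comm]; exact hsup⟩
    obtain ⟨P, hP1, hP2⟩ : ∃ P : H →L[ℂ] M, (∀ u : M, P u = u) ∧ ∀ u ∈ pker D, P u = 0 := by
      have ht := Submodule.IsCompl.isTopCompl_of_isClosed hc hM hN
      refine ⟨M.projectionOntoL (pker D) ht, fun u => ?_, fun u hu => ?_⟩
      · exact Submodule.projectionOntoL_apply_left ht u
      · exact (Submodule.projectionOntoL_apply_eq_zero_iff ht).2 hu
    refine ⟨(‖P‖ + 1)⁻¹, by positivity, 1, one_pos, fun ℓ => ?_⟩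
    let w : H := (InnerProductSpace.toDual ℂ H).symm (ℓ.comp P)
    have hw : ∀ u, inner ℂ w u = ℓ (P u) := fun u => by
      simp [w, InnerProductSpace.toDual_symm_apply]
    have hwn : ‖w‖ = ‖ℓ.comp P‖ := by simp [w]
    refine ⟨w, ?_, fun u => by rw [hw, hP1], ?_, ?_⟩
    · rw [← Submodule.orthogonal_orthogonal_eq_closure, SetLike.mem_coe,
        Submodule.mem_orthogonal']
      intro v hv
      rw [hw, hP2 v (mem_pker_of_orth D hD hdense v hv), map_zero]
    · rw [inv_mul_le_iff₀ (by positivity), hwn]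
      have := ℓ.opNorm_comp_le P
      nlinarith [norm_nonneg ℓ]
    · refine ℓ.opNorm_le_bound (by positivity) fun u => ?_
      have h : ℓ u = inner ℂ w (u : H) := by rw [hw, hP1]
      rw [h, one_mul]
      exact norm_inner_le_norm w (u : H)
  · intro w _
    exact ⟨(InnerProductSpace.toDual ℂ H w).comp (Submodule.subtypeL _), fun u => by simp⟩
end
end

section
/- Assume B is bounded below on the closure of R(D) and that D kernel/range decomposes. If BD is bisectorial of angle ω, then DB is bisectorial of angle ω. -/
noncomputable section

variable {X : Type*} [NormedAddCommGroup X] [NormedSpace ℂ X]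

/-- If `B` is bounded below on the closure of `R(D)`, `D` kernel/range
decomposes and `BD` is bisectorial of angle `ω`, then `DB` is bisectorial of angle `ω`. -/
theorem stmt_14 {X : Type*} [NormedAddCommGroup X] [NormedSpace ℂ X] [CompleteSpace X]
    (hrefl : ReflexiveSpace X) (D : X →ₗ.[ℂ] X) (hD : D.IsClosed)
    (hdense : Dense (D.domain : Set X)) (B : X →L[ℂ] X)
    (hlow : BoundedBelowOn B ((pran D).topologicalClosure : Set X))
    (hD' : KerRanDecomp D) (ω : ℝ) (hω : ω ∈ Set.Ico 0 (Real.pi / 2))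
    (hBD : IsBisectorial (opBD B D) ω) :
    IsBisectorial (opDB B D) ω := by
  obtain ⟨c, hc, hlow⟩ := hlow
  obtain ⟨-, hres⟩ := hBD
  refine ⟨?_, ?_⟩
  · have hg : ((opDB B D).graph : Set (X × X)) =
        (fun p : X × X => (B p.1, p.2)) ⁻¹' (D.graph : Set (X × X)) := by
      ext ⟨u, w⟩
      simp only [SetLike.mem_coe, Set.mem_preimage, LinearPMap.mem_graph_iff]
      constructor
      · rintro ⟨y, rfl, rfl⟩
        exact ⟨⟨B y, y.2⟩, rfl, rfl⟩
      · rintro ⟨y, hy, rfl⟩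
        have hu : B u ∈ D.domain := hy ▸ y.2
        refine ⟨⟨u, hu⟩, rfl, ?_⟩
        have : y = ⟨B u, hu⟩ := Subtype.ext hy
        rw [this]
        rfl
    unfold LinearPMap.IsClosed at hD ⊢
    rw [hg]
    exact hD.preimage (by fun_prop)
  · intro ω' hω'
    obtain ⟨C, hC, h⟩ := hres ω' hω'
    refine ⟨1 + c⁻¹ * ((1 + C) * ‖B‖), by positivity, fun lam hlam => ?_⟩
    obtain ⟨⟨hinj, hsurj⟩, hbd⟩ := h lam hlam
    have hbd' : ∀ v : D.domain, ‖(v : X)‖ ≤ C * ‖(v : X) + lam • B (D v)‖ := hbd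
    have key : ∀ u : (opDB B D).domain, ‖(u : X)‖ ≤
        (1 + c⁻¹ * ((1 + C) * ‖B‖)) * ‖(u : X) + lam • (opDB B D) u‖ := by
      intro u
      let v : D.domain := ⟨B u, u.2⟩
      have hv : (opDB B D) u = D v := rfl
      rw [hv]
      set f : X := (u : X) + lam • D v with hf
      have hBf : B f = (v : X) + lam • B (D v) := by
        rw [hf, map_add, map_smul]
      have h1 : ‖(v : X)‖ ≤ C * ‖B f‖ := hBf ▸ hbd' v
      have h2 : ‖lam • B (D v)‖ ≤ ‖B f‖ + ‖(v : X)‖ := by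
        have : lam • B (D v) = B f - (v : X) := by rw [hBf]; abel
        rw [this]
        exact norm_sub_le _ _
      have h3 : c * ‖lam • D v‖ ≤ ‖lam • B (D v)‖ := by
        rw [← map_smul]
        exact hlow _ (Submodule.smul_mem _ _ (Submodule.le_topologicalClosure _ ⟨v, rfl⟩))
      have h4 : ‖B f‖ ≤ ‖B‖ * ‖f‖ := B.le_opNorm f
      have h5 : ‖(u : X)‖ ≤ ‖f‖ + ‖lam • D v‖ := by
        have : (u : X) = f - lam • D v := by rw [hf]; abel
        rw [this]
        exact norm_sub_le _ _
      have h6 : c * ‖lam • D v‖ ≤ (1 + C) * ‖B‖ * ‖f‖ := by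
        have := mul_le_mul_of_nonneg_left h4 (by positivity : 0 ≤ 1 + C)
        linarith
      have h7 : ‖lam • D v‖ ≤ c⁻¹ * ((1 + C) * ‖B‖ * ‖f‖) := by
        rw [inv_mul_eq_div, le_div_iff₀ hc]
        linarith
      linarith
    refine ⟨⟨?_, ?_⟩, key⟩
    · intro u w huw
      have h0 := key (u - w)
      have : ((u - w : (opDB B D).domain) : X) + lam • (opDB B D) (u - w) = 0 := by
        have huw' : (u : X) + lam • (opDB B D) u = (w : X) + lam • (opDB B D) w := huw
        rw [LinearPMap.map_sub, smul_sub, Submodule.coe_sub, ← sub_eq_zero.mpr huw']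
        abel
      rw [this, norm_zero, mul_zero] at h0
      have h1 : ((u - w : (opDB B D).domain) : X) = 0 := norm_le_zero_iff.mp h0
      exact sub_eq_zero.mp (Subtype.ext h1)
    · intro f
      obtain ⟨v, hv⟩ := hsurj (B f)
      change D.domain at v
      have hv' : (v : X) + lam • B (D v) = B f := hv
      have hBu : B (f - lam • D v) = (v : X) := by
        rw [map_sub, map_smul, ← hv']
        abel
      have hmem : B (f - lam • D v) ∈ D.domain := hBu ▸ v.2
      refine ⟨⟨f - lam • D v, hmem⟩, ?_⟩
      have : (opDB B D) ⟨f - lam • D v, hmem⟩ = D v := by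
        change D ⟨B (f - lam • D v), hmem⟩ = D v
        congr 1
        exact Subtype.ext hBu
      change (f - lam • D v) + lam • (opDB B D) ⟨f - lam • D v, hmem⟩ = f
      rw [this]
      abel
end
end

section
/- Let D be a closed, densely defined linear operator on a complex Banach space X and B a bounded linear operator on X such that ‖B(Du)‖ ≥ c‖Du‖ for all u ∈ D(D), for some c > 0. Let λ ∈ ℂ and suppose that I + λBD : D(D) → X is a bijection whose inverse is bounded with norm at most C. Then for all u ∈ D(D): δ·(‖u‖ + |λ|·‖Du‖) ≤ ‖(I + λBD)u‖ ≤ max(1, ‖B‖)·(‖u‖ + |λ|·‖Du‖), where δ = min((2C)⁻¹, c·(2C + 2)⁻¹). -/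
noncomputable section

variable {X : Type*} [NormedAddCommGroup X] [NormedSpace ℂ X]

/-- Let `D` be closed and densely defined on a complex Banach space `X` and
`B` bounded with `‖B (D u)‖ ≥ c ‖D u‖` for all `u ∈ D(D)`, for some `c > 0`. If
`I + λ BD : D(D) → X` is a bijection whose inverse is bounded with norm at most `C`, then for
all `u ∈ D(D)`,
`δ (‖u‖ + |λ| ‖D u‖) ≤ ‖(I + λ BD) u‖ ≤ max 1 ‖B‖ (‖u‖ + |λ| ‖D u‖)`,
where `δ = min (2C)⁻¹ (c (2C + 2)⁻¹)`. -/
theorem stmt_18 {X : Type*} [NormedAddCommGroup X] [NormedSpace ℂ X] [CompleteSpace X]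
    (D : X →ₗ.[ℂ] X) (hD : D.IsClosed) (hdense : Dense (D.domain : Set X)) (B : X →L[ℂ] X)
    (c : ℝ) (hc : 0 < c) (hlow : ∀ u : D.domain, c * ‖D u‖ ≤ ‖B (D u)‖)
    (lam : ℂ) (C : ℝ)
    (hbij : Function.Bijective (fun u : D.domain => (u : X) + lam • B (D u)))
    (hinv : ∀ u : D.domain, ‖(u : X)‖ ≤ C * ‖(u : X) + lam • B (D u)‖) :
    ∀ u : D.domain,
      min (2 * C)⁻¹ (c * (2 * C + 2)⁻¹) * (‖(u : X)‖ + ‖lam‖ * ‖D u‖)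
          ≤ ‖(u : X) + lam • B (D u)‖ ∧
      ‖(u : X) + lam • B (D u)‖ ≤ max 1 ‖B‖ * (‖(u : X)‖ + ‖lam‖ * ‖D u‖) := by
  intro u
  have hw := norm_nonneg ((u : X) + lam • B (D u))
  have h1 := hinv u
  have hBn : ‖lam • B (D u)‖ ≤ ‖lam‖ * (‖B‖ * ‖D u‖) := by
    rw [norm_smul]
    exact mul_le_mul_of_nonneg_left (B.le_opNorm _) (norm_nonneg _)
  have hBl : ‖lam‖ * (c * ‖D u‖) ≤ ‖lam • B (D u)‖ := by
    rw [norm_smul]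
    exact mul_le_mul_of_nonneg_left (hlow u) (norm_nonneg _)
  constructor
  · rcases le_or_gt C 0 with hC | hC
    · have hu : ‖(u : X)‖ ≤ 0 := h1.trans (mul_nonpos_of_nonpos_of_nonneg hC hw)
      have hu0 : u = 0 := Subtype.ext (norm_le_zero_iff.mp hu)
      subst hu0
      simp
    · have h2 : ‖lam • B (D u)‖ ≤ ‖(u : X) + lam • B (D u)‖ + ‖(u : X)‖ := by
        have := norm_sub_le ((u : X) + lam • B (D u)) (u : X)
        simpa using this
      generalize ‖(u : X) + lam • B (D u)‖ = w at *
      have ha : min (2 * C)⁻¹ (c * (2 * C + 2)⁻¹) * ‖(u : X)‖ ≤ w / 2 := by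
        calc _ ≤ (2 * C)⁻¹ * (C * w) :=
              mul_le_mul (min_le_left _ _) h1 (norm_nonneg _) (by positivity)
          _ = w / 2 := by field_simp
      have hb : min (2 * C)⁻¹ (c * (2 * C + 2)⁻¹) * (‖lam‖ * ‖D u‖) ≤ w / 2 := by
        calc _ ≤ (c * (2 * C + 2)⁻¹) * (‖lam‖ * ‖D u‖) :=
              mul_le_mul_of_nonneg_right (min_le_right _ _) (by positivity)
          _ = (2 * C + 2)⁻¹ * (‖lam‖ * (c * ‖D u‖)) := by ring
          _ ≤ (2 * C + 2)⁻¹ * ((C + 1) * w) :=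
              mul_le_mul_of_nonneg_left (by linarith) (by positivity)
          _ = w / 2 := by field_simp
      rw [mul_add]
      linarith
  · have h3 := norm_add_le (u : X) (lam • B (D u))
    have h4 : 1 * ‖(u : X)‖ ≤ max 1 ‖B‖ * ‖(u : X)‖ :=
      mul_le_mul_of_nonneg_right (le_max_left _ _) (norm_nonneg _)
    have h5 : ‖B‖ * (‖lam‖ * ‖D u‖) ≤ max 1 ‖B‖ * (‖lam‖ * ‖D u‖) :=
      mul_le_mul_of_nonneg_right (le_max_right _ _) (by positivity)
    rw [mul_add]
    linarith
end
end
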